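/- arXiv:1807.06549 — 3 statements merged into one kernel-verified Lean document; each statement's English description precedes it below -/
import Mathlib

section
/- Let σ > 0 and μ ≥ 0 be constants with 2 < 2μσ + σ²π². Set s := (μσ−1)/σ², p(s,θ) := |s|/(s + (π−θ)²) and g(s) := inf{ 1/(sin(θ)(1 − p(s,θ))) : 0 < θ < π − √(|s| − s) }. Then for every bounded d ∈ C²([0,∞);ℝ) and every classical solution u of the damped wave system with boundary input d, it holds that limsup_{t→+∞} ( max_{x∈[0,1]} |u(t,x)| ) ≤ g(s) · sup_{t≥0} |d(t)|. -/
/-!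
Put `s = (μσ - 1)/σ²` and `R = u_t - σ u_xx + σ s u`. The wave equation is equivalent to the pair
`u_t = σ u_xx - σ s u + R`, `R_t = -R/σ + s u`: a heat equation coupled, pointwise in `x`, to a
linear ODE in time (`solution_bound`; `interchange` supplies `∂_t u_xx = ∂_xx u_t`, which the
regularity of `u` does not give at once). The boundary input enters only through `u(t,0) = d(t)`,
so no bound on `d'` is needed.

A maximum principle then applies. For admissible `θ` choose `a < π - θ` with `a² > |s| - s` and
compare `|u|` with `sin(θ + ax) (sup|d| / sin θ + K e^{-εt})`. If `|u|` stays below this barrier up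
to time `t₀`, the ODE bounds `R` (`memory_bound`), and the barrier is a strict supersolution of the
heat equation because `a² + s - |s| > 0`, provided `ε` is small and `K` large; hence it is never
reached (`no_touch`, `barrier`). Letting `t → ∞`, the limsup is at most `sup|d| / sin θ`, which is
at most `sup|d| / (sin θ (1 - p(s,θ)))` since `0 ≤ p < 1`. The hypothesis `2 < 2μσ + σ²π²` says
that `√(|s| - s) < π`, so the infimum defining `g(s)` is over a nonempty set.
-/

open Real Filter MeasureTheory intervalIntegral Set

noncomputable section

/-- Time derivative ∂u/∂t. -/
def u_t (u : ℝ → ℝ → ℝ) (t x : ℝ) : ℝ := deriv (fun τ => u τ x) t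

/-- Second time derivative ∂²u/∂t². -/
def u_tt (u : ℝ → ℝ → ℝ) (t x : ℝ) : ℝ := deriv (deriv (fun τ => u τ x)) t

/-- Second space derivative ∂²u/∂x². -/
def u_xx (u : ℝ → ℝ → ℝ) (t x : ℝ) : ℝ := deriv (deriv (fun y => u t y)) x

/-- Mixed derivative ∂³u/∂t∂x². -/
def u_txx (u : ℝ → ℝ → ℝ) (t x : ℝ) : ℝ := deriv (deriv (fun y => u_t u t y)) x

/-- A classical solution of the wave equation with Kelvin-Voigt and viscous damping
with boundary input `d`: `u` is of class `C²`, `x ↦ ∂u/∂t(t,x)` is of class `C²` for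
each `t ≥ 0`, the PDE holds for `t ≥ 0`, `x ∈ [0,1]`, and `u(t,0) = d(t)`, `u(t,1) = 0`. -/
def IsClassicalSolution (σ μ : ℝ) (d : ℝ → ℝ) (u : ℝ → ℝ → ℝ) : Prop :=
  ContDiff ℝ 2 (Function.uncurry u) ∧
  (∀ t : ℝ, 0 ≤ t → ContDiff ℝ 2 (fun x => u_t u t x)) ∧
  (∀ t x : ℝ, 0 ≤ t → x ∈ Set.Icc (0:ℝ) 1 →
    u_tt u t x = u_xx u t x + σ * u_txx u t x - μ * u_t u t x) ∧
  (∀ t : ℝ, 0 ≤ t → u t 0 = d t ∧ u t 1 = 0)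

/-- A bounded disturbance of class `C²`. -/
def BddC2 (d : ℝ → ℝ) : Prop :=
  ContDiff ℝ 2 d ∧ ∃ M : ℝ, ∀ t : ℝ, 0 ≤ t → |d t| ≤ M

/-- `sup_{t ≥ 0} |d(t)|`. -/
def supD (d : ℝ → ℝ) : ℝ := sSup {y : ℝ | ∃ t : ℝ, 0 ≤ t ∧ y = |d t|}

/-- `max_{x ∈ [0,1]} |u(t,x)|`, the spatial sup norm of the displacement. -/
def supNorm (u : ℝ → ℝ → ℝ) (t : ℝ) : ℝ :=
  sSup {y : ℝ | ∃ x ∈ Set.Icc (0:ℝ) 1, y = |u t x|}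

/-- `(∫₀¹ u(t,x)² dx)^{1/2}`, the spatial L² norm of the displacement. -/
def L2Norm (u : ℝ → ℝ → ℝ) (t : ℝ) : ℝ := Real.sqrt (∫ x in (0:ℝ)..1, (u t x) ^ 2)

/-- `p(s,θ) := |s|/(s + (π−θ)²)`. -/
def pfun (s θ : ℝ) : ℝ := |s| / (s + (π - θ) ^ 2)

/-- `g(s) := inf{ 1/(sin(θ)(1 − p(s,θ))) : 0 < θ < π − √(|s| − s) }`. -/
def gfun (s : ℝ) : ℝ :=
  sInf {y : ℝ | ∃ θ : ℝ, 0 < θ ∧ θ < π - Real.sqrt (|s| - s) ∧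
    y = 1 / (Real.sin θ * (1 - pfun s θ))}

/-! ### First- and second-order conditions at a maximum -/

/-- Second-order necessary condition at a local maximum. -/
lemma second_deriv_nonpos {f f' : ℝ → ℝ} {f'' x : ℝ} (hf : ∀ y, HasDerivAt f (f' y) y)
    (hf' : HasDerivAt f' f'' x) (hmax : IsLocalMax f x) : f'' ≤ 0 := by
  by_contra hpos
  push Not at hpos
  have hd : deriv f = f' := funext fun y => (hf y).deriv
  have hmin : IsLocalMin f x := by
    apply isLocalMin_of_deriv_deriv_pos
    · rw [hd, hf'.deriv]; exact hpos
    · exact hmax.deriv_eq_zero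
    · exact (hf x).continuousAt
  have hconst : ∀ᶠ y in nhds x, f y = f x := by
    filter_upwards [hmax, hmin] with y h1 h2 using le_antisymm h1 h2
  have h0 : ∀ᶠ y in nhds x, f' y = 0 := by
    filter_upwards [hconst.eventually_nhds] with y hy
    exact (hf y).unique ((hasDerivAt_const y (f x)).congr_of_eventuallyEq hy)
  have := hf'.unique ((hasDerivAt_const x (0:ℝ)).congr_of_eventuallyEq h0)
  linarith

/-- A function that attains its maximum over `[0, t]` at the right endpoint has a nonnegative
derivative there. -/
lemma deriv_nonneg_of_left {f : ℝ → ℝ} {f' t : ℝ} (hf : HasDerivAt f f' t)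
    (ht : 0 < t) (hle : ∀ τ, 0 ≤ τ → τ < t → f τ ≤ f t) : 0 ≤ f' := by
  have h := (hasDerivAt_iff_tendsto_slope.1 hf).mono_left
    (nhdsWithin_mono t (show Iio t ⊆ {t}ᶜ from fun y hy => ne_of_lt hy))
  refine ge_of_tendsto h ?_
  filter_upwards [Ioo_mem_nhdsLT ht] with y hy
  rw [slope_def_field]
  exact div_nonneg_of_nonpos (by linarith [hle y hy.1.le hy.2]) (by linarith [hy.2])

/-! ### The barrier -/

/-- Comparison for the memory equation `R' = -R/σ + s f`: if `|f|` lies below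
`F (A + K e^{-εt})` on `(0, t₀)`, then `R` lies below the corresponding solution with source
`|s| F (A + K e^{-εt})`, up to a transient `H e^{-t/σ}`. The factor `q = 1/(1 - εσ)` is what the
kernel `e^{-t/σ}/σ` makes of `e^{-εt}`. -/
lemma memory_bound {σ s ε q A K F H t₀ : ℝ} (hσ : 0 < σ) (hq : q * (1 - ε * σ) = 1)
    {f R : ℝ → ℝ} (ht₀ : 0 ≤ t₀)
    (hRc : Continuous R) (hR : ∀ t, 0 < t → HasDerivAt R (-(R t) / σ + s * f t) t)
    (hf : ∀ t, 0 < t → t < t₀ → |f t| ≤ F * (A + K * exp (-ε * t)))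
    (hR0 : R 0 ≤ H + σ * |s| * F * (A + q * K)) :
    R t₀ ≤ H * exp (-t₀ / σ) + σ * |s| * F * (A + q * K * exp (-ε * t₀)) := by
  set G : ℝ → ℝ := fun t =>
    exp (t / σ) * (R t - σ * |s| * F * (A + q * K * exp (-ε * t))) with hG
  have hder : ∀ t, 0 < t → HasDerivAt G
      (exp (t / σ) * (s * f t - |s| * (F * (A + K * exp (-ε * t))))) t := by
    intro t ht
    have h1 : HasDerivAt (fun t : ℝ => exp (t / σ)) (exp (t / σ) * (1 / σ)) t :=
      ((hasDerivAt_id t).div_const σ).exp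
    have h2 : HasDerivAt (fun t : ℝ => exp (-ε * t)) (exp (-ε * t) * (-ε * 1)) t :=
      ((hasDerivAt_id t).const_mul (-ε)).exp
    have h3 := h1.mul ((hR t ht).sub (((h2.const_mul (q * K)).const_add A).const_mul
      (σ * |s| * F)))
    refine h3.congr_deriv ?_
    simp only [Pi.sub_apply]
    generalize exp (-ε * t) = E
    field_simp
    linear_combination (-σ * |s| * F * K * E) * hq
  have hanti : AntitoneOn G (Icc 0 t₀) := by
    apply antitoneOn_of_deriv_nonpos (convex_Icc _ _)
    · rw [hG]; fun_prop
    · intro t ht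
      rw [interior_Icc] at ht
      exact (hder t ht.1).differentiableAt.differentiableWithinAt
    · intro t ht
      rw [interior_Icc] at ht
      rw [(hder t ht.1).deriv]
      apply mul_nonpos_of_nonneg_of_nonpos (exp_pos _).le
      have h1 : s * f t ≤ |s| * |f t| := by rw [← abs_mul]; exact le_abs_self _
      have h2 := mul_le_mul_of_nonneg_left (hf t ht.1 ht.2) (abs_nonneg s)
      linarith
  have h := hanti (left_mem_Icc.2 ht₀) (right_mem_Icc.2 ht₀) ht₀
  have hG0 : G 0 ≤ H := by simp [hG]; linarith
  have hGt : G t₀ ≤ H := h.trans hG0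
  have h5 := mul_le_mul_of_nonneg_left hGt (exp_pos (-t₀ / σ)).le
  have h6 : exp (-t₀ / σ) * exp (t₀ / σ) = 1 := by
    rw [← exp_add, neg_div, neg_add_cancel, exp_zero]
  simp only [hG] at h5
  rw [← mul_assoc, h6] at h5
  linarith

/-- The solution cannot reach the barrier `sin(θ + ax) (A + K e^{-εt})` from below for the first
time at an interior point `(t₀, x₀)`: there `∂u/∂t` is at least and `∂²u/∂x²` at most that of the
barrier, which contradicts the strict supersolution property `hbr`, `hHK` of the barrier. -/
lemma no_touch {σ s a θ A K ε q H m t₀ x₀ : ℝ} (hσ : 0 < σ) (hε : 0 < ε) (hεσ : ε * σ < 1)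
    (hq : q * (1 - ε * σ) = 1) (hA : 0 ≤ A) (hK : 0 < K) (hH : 0 ≤ H) (hm : 0 < m)
    (hc : 0 < a ^ 2 + s - |s|)
    (hbr : 0 < σ * (a ^ 2 + s - |s|) - σ * |s| * (q - 1) - ε)
    (hHK : H < K * m * (σ * (a ^ 2 + s - |s|) - σ * |s| * (q - 1) - ε))
    (hφ : ∀ x ∈ Icc (0:ℝ) 1, m ≤ sin (θ + a * x))
    {u ut ux uxx R : ℝ → ℝ → ℝ}
    (hut : ∀ t x, HasDerivAt (fun τ => u τ x) (ut t x) t)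
    (hux : ∀ t x, HasDerivAt (u t) (ux t x) x)
    (huxx : ∀ t x, HasDerivAt (ux t) (uxx t x) x)
    (hRc : ∀ x, Continuous fun t => R t x)
    (hR : ∀ t, 0 < t → ∀ x ∈ Ioo (0:ℝ) 1,
      HasDerivAt (fun τ => R τ x) (-(R t x) / σ + s * u t x) t)
    (heq : ∀ t x, ut t x = σ * uxx t x - σ * s * u t x + R t x)
    (hR0 : ∀ x ∈ Icc (0:ℝ) 1, |R 0 x| ≤ H)
    (ht₀ : 0 < t₀) (hx₀ : x₀ ∈ Ioo (0:ℝ) 1)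
    (hlt : ∀ t, 0 ≤ t → t < t₀ → ∀ x ∈ Icc (0:ℝ) 1,
      |u t x| < sin (θ + a * x) * (A + K * exp (-ε * t)))
    (htouch : sin (θ + a * x₀) * (A + K * exp (-ε * t₀)) ≤ u t₀ x₀) : False := by
  have hxIcc : x₀ ∈ Icc (0:ℝ) 1 := Ioo_subset_Icc_self hx₀
  have hF := hφ x₀ hxIcc
  -- by continuity the weak barrier persists at the touching time
  have hle : ∀ x ∈ Icc (0:ℝ) 1, u t₀ x ≤ sin (θ + a * x) * (A + K * exp (-ε * t₀)) := by
    intro x hx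
    have c1 : ContinuousAt (fun t => u t x) t₀ := (hut t₀ x).continuousAt
    have c2 : ContinuousAt (fun t => sin (θ + a * x) * (A + K * exp (-ε * t))) t₀ := by
      fun_prop
    refine le_of_tendsto_of_tendsto (c1.tendsto.mono_left nhdsWithin_le_nhds)
      (c2.tendsto.mono_left (nhdsWithin_le_nhds (s := Iio t₀))) ?_
    filter_upwards [Ioo_mem_nhdsLT ht₀] with t ht
    exact (le_abs_self _).trans (hlt t ht.1.le ht.2 x hx).le
  have hu₀ : u t₀ x₀ = sin (θ + a * x₀) * (A + K * exp (-ε * t₀)) :=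
    le_antisymm (hle x₀ hxIcc) htouch
  -- first-order condition in time
  have hT : 0 ≤ ut t₀ x₀ - sin (θ + a * x₀) * (K * (exp (-ε * t₀) * (-ε * 1))) := by
    have h2 : HasDerivAt (fun t : ℝ => exp (-ε * t)) (exp (-ε * t₀) * (-ε * 1)) t₀ :=
      ((hasDerivAt_id t₀).const_mul (-ε)).exp
    refine deriv_nonneg_of_left ((hut t₀ x₀).sub
      (((h2.const_mul K).const_add A).const_mul (sin (θ + a * x₀)))) ht₀ ?_
    intro τ h0 h1
    simp only [Pi.sub_apply]
    have := (le_abs_self _).trans (hlt τ h0 h1 x₀ hxIcc).le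
    linarith
  -- second-order condition in space
  have hX : uxx t₀ x₀ - (-sin (θ + a * x₀) * a * a) * (A + K * exp (-ε * t₀)) ≤ 0 := by
    have hl : ∀ y : ℝ, HasDerivAt (fun y => θ + a * y) a y := fun y => by
      simpa using ((hasDerivAt_id y).const_mul a).const_add θ
    refine second_deriv_nonpos
      (f := fun x => u t₀ x - sin (θ + a * x) * (A + K * exp (-ε * t₀)))
      (f' := fun x => ux t₀ x - (cos (θ + a * x) * a) * (A + K * exp (-ε * t₀)))
      (fun y => (hux t₀ y).sub ((hl y).sin.mul_const _))
      ((huxx t₀ x₀).sub (((hl x₀).cos.mul_const a).mul_const _)) ?_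
    filter_upwards [Icc_mem_nhds hx₀.1 hx₀.2] with y hy
    have := hle y hy
    linarith
  have hq0 : 0 < q := by
    by_contra hn
    push Not at hn
    nlinarith
  have hRt : R t₀ x₀ ≤ H * exp (-t₀ / σ)
      + σ * |s| * sin (θ + a * x₀) * (A + q * K * exp (-ε * t₀)) := by
    refine memory_bound hσ hq (f := fun t => u t x₀) (R := fun t => R t x₀) ht₀.le (hRc x₀)
      (fun t ht => hR t ht x₀ hx₀) (fun t h0 h1 => (hlt t h0.le h1 x₀ hxIcc).le) ?_
    have h1 := (le_abs_self _).trans (hR0 x₀ hxIcc)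
    have : 0 ≤ σ * |s| * sin (θ + a * x₀) * (A + q * K) := by
      have := hm.trans_le hF
      positivity
    linarith
  have hexp : exp (-t₀ / σ) ≤ exp (-ε * t₀) := by
    apply exp_le_exp.2
    rw [div_le_iff₀ hσ]
    nlinarith
  have hE := exp_pos (-ε * t₀)
  set E := exp (-ε * t₀)
  set F := sin (θ + a * x₀)
  have hF0 : 0 < F := hm.trans_le hF
  set B := σ * (a ^ 2 + s - |s|) - σ * |s| * (q - 1) - ε with hB
  have h1 : H * exp (-t₀ / σ) ≤ H * E := mul_le_mul_of_nonneg_left hexp hH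
  have h2 : H * E < K * F * B * E := by
    apply mul_lt_mul_of_pos_right _ hE
    refine hHK.trans_le ?_
    gcongr
  have h3 : 0 ≤ σ * (a ^ 2 + s - |s|) * F * A := by positivity
  have h4 := mul_le_mul_of_nonneg_left hX hσ.le
  have h5 := heq t₀ x₀
  rw [hu₀] at h5
  rw [hB] at h2
  nlinarith

/-- Global barrier for `u_t = σ u_xx - σ s u + R`, `R_t = -R/σ + s u`. The hypothesis
`θ + a < π` keeps the weight `sin(θ + ax)` positive on all of `[0,1]`, and at `x = 0` the barrier
exceeds `D`. -/
theorem barrier {σ s a θ D : ℝ} (hσ : 0 < σ) (hD : 0 ≤ D) (hθ : 0 < θ) (ha : 0 < a)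
    (haθ : θ + a < π) (hc : 0 < a ^ 2 + s - |s|)
    {u ut ux uxx R : ℝ → ℝ → ℝ}
    (huc : Continuous (Function.uncurry u))
    (hut : ∀ t x, HasDerivAt (fun τ => u τ x) (ut t x) t)
    (hux : ∀ t x, HasDerivAt (u t) (ux t x) x)
    (huxx : ∀ t x, HasDerivAt (ux t) (uxx t x) x)
    (hRc : Continuous (Function.uncurry R))
    (hR : ∀ t, 0 < t → ∀ x ∈ Ioo (0:ℝ) 1,
      HasDerivAt (fun τ => R τ x) (-(R t x) / σ + s * u t x) t)
    (heq : ∀ t x, ut t x = σ * uxx t x - σ * s * u t x + R t x)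
    (h0 : ∀ t, 0 ≤ t → |u t 0| ≤ D) (h1 : ∀ t, 0 ≤ t → u t 1 = 0) :
    ∃ K ε : ℝ, 0 < K ∧ 0 < ε ∧ ∀ t, 0 ≤ t → ∀ x ∈ Icc (0:ℝ) 1,
      |u t x| < sin (θ + a * x) * (D / sin θ + K * exp (-ε * t)) := by
  have hφpos : ∀ x ∈ Icc (0:ℝ) 1, 0 < sin (θ + a * x) := by
    intro x hx
    apply sin_pos_of_pos_of_lt_pi
    · nlinarith [hx.1]
    · nlinarith [hx.2]
  have hsinθ : 0 < sin θ := by simpa using hφpos 0 (by simp)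
  obtain ⟨m, hm, hφ⟩ : ∃ m, 0 < m ∧ ∀ x ∈ Icc (0:ℝ) 1, m ≤ sin (θ + a * x) := by
    obtain ⟨x, hx, hmin⟩ := isCompact_Icc.exists_isMinOn (nonempty_Icc.2 (zero_le_one' ℝ))
      (f := fun x => sin (θ + a * x)) (by fun_prop)
    exact ⟨_, hφpos x hx, fun y hy => hmin hy⟩
  obtain ⟨H, hR0⟩ : ∃ H, ∀ x ∈ Icc (0:ℝ) 1, |R 0 x| ≤ H := by
    have : Continuous (fun x => R 0 x) := hRc.comp (by fun_prop : Continuous fun x => ((0:ℝ), x))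
    exact isCompact_Icc.exists_bound_of_continuousOn this.continuousOn
  obtain ⟨M, hM⟩ : ∃ M, ∀ x ∈ Icc (0:ℝ) 1, |u 0 x| ≤ M := by
    have : Continuous (fun x => u 0 x) := huc.comp (by fun_prop : Continuous fun x => ((0:ℝ), x))
    exact isCompact_Icc.exists_bound_of_continuousOn this.continuousOn
  have hH : 0 ≤ H := (abs_nonneg _).trans (hR0 0 (by simp))
  have hM0 : 0 ≤ M := (abs_nonneg _).trans (hM 0 (by simp))
  -- at `ε = 0` the expression equals `σ (a² + s - |s|) > 0`
  obtain ⟨ε, hε, hεσ, hbr⟩ : ∃ ε, 0 < ε ∧ ε * σ < 1 ∧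
      0 < σ * (a ^ 2 + s - |s|) - σ * |s| * ((1 - ε * σ)⁻¹ - 1) - ε := by
    have hcont : ContinuousAt (fun ε : ℝ =>
        σ * (a ^ 2 + s - |s|) - σ * |s| * ((1 - ε * σ)⁻¹ - 1) - ε) 0 := by
      have : ContinuousAt (fun ε : ℝ => (1 - ε * σ)⁻¹) 0 :=
        ContinuousAt.inv₀ (by fun_prop) (by simp)
      fun_prop
    have hev : ∀ᶠ ε in nhds (0:ℝ),
        0 < σ * (a ^ 2 + s - |s|) - σ * |s| * ((1 - ε * σ)⁻¹ - 1) - ε :=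
      hcont.eventually_const_lt (by simp; positivity)
    have hev2 : ∀ᶠ ε in nhds (0:ℝ), ε * σ < 1 :=
      (by fun_prop : ContinuousAt (fun ε : ℝ => ε * σ) 0).eventually_lt_const (by simp)
    obtain ⟨ε, ⟨h1, h2⟩, h3⟩ := ((hev2.and hev).filter_mono
      (nhdsWithin_le_nhds (s := Ioi 0))).and self_mem_nhdsWithin |>.exists
    exact ⟨ε, h3, h1, h2⟩
  set q := (1 - ε * σ)⁻¹ with hqdef
  have hq : q * (1 - ε * σ) = 1 := inv_mul_cancel₀ (by linarith)
  set B := σ * (a ^ 2 + s - |s|) - σ * |s| * (q - 1) - ε with hB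
  obtain ⟨K, hK, hKH, hKM⟩ : ∃ K, 0 < K ∧ H < K * m * B ∧ M < m * K := by
    refine ⟨(H + 1) / (m * B) + (M + 1) / m, by positivity, ?_, ?_⟩
    · have e : ((H + 1) / (m * B) + (M + 1) / m) * m * B = (H + 1) + (M + 1) * B := by
        field_simp
      rw [e]; nlinarith
    · have e : m * ((H + 1) / (m * B) + (M + 1) / m) = (H + 1) / B + (M + 1) := by
        field_simp
      rw [e]
      have : 0 < (H + 1) / B := by positivity
      linarith
  have hA : 0 ≤ D / sin θ := by positivity
  refine ⟨K, ε, hK, hε, ?_⟩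
  by_contra hcon
  push Not at hcon
  obtain ⟨T, hT, y, hy, hTy⟩ := hcon
  -- a point of the violation set with minimal time is a first touching point
  set S : Set (ℝ × ℝ) := (Icc 0 T ×ˢ Icc 0 1) ∩ {z | sin (θ + a * z.2) *
    (D / sin θ + K * exp (-ε * z.1)) ≤ |Function.uncurry u z|} with hS
  have hScomp : IsCompact S := (isCompact_Icc.prod isCompact_Icc).inter_right
    (isClosed_le (by fun_prop) huc.abs)
  obtain ⟨⟨t₀, x₀⟩, ⟨⟨ht₀, hx₀⟩, htouch⟩, hmin⟩ := hScomp.exists_isMinOn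
    ⟨(T, y), ⟨⟨⟨hT, le_rfl⟩, hy⟩, hTy⟩⟩ continuous_fst.continuousOn
  simp only [Set.mem_ofPred_eq, Function.uncurry] at htouch ht₀ hx₀
  have hlt : ∀ t, 0 ≤ t → t < t₀ → ∀ x ∈ Icc (0:ℝ) 1,
      |u t x| < sin (θ + a * x) * (D / sin θ + K * exp (-ε * t)) := by
    intro t h0 h1 x hx
    by_contra hn
    push Not at hn
    have : t₀ ≤ t := hmin (a := (t, x)) ⟨⟨⟨h0, h1.le.trans ht₀.2⟩, hx⟩, hn⟩
    linarith
  have ht0 : 0 < t₀ := by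
    rcases ht₀.1.eq_or_lt with h | h
    · exfalso
      rw [← h] at htouch
      have e1 := hM x₀ hx₀
      have e2 := hφ x₀ hx₀
      simp only [mul_zero, exp_zero, mul_one] at htouch
      have : m * K ≤ sin (θ + a * x₀) * (D / sin θ + K) := by
        apply mul_le_mul e2 (by linarith) hK.le (hm.le.trans e2)
      linarith
    · exact h
  have hE : 0 < K * exp (-ε * t₀) := mul_pos hK (exp_pos _)
  have hx0 : 0 < x₀ := by
    rcases hx₀.1.eq_or_lt with h | h
    · exfalso
      rw [← h] at htouch
      have := h0 t₀ ht₀.1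
      simp only [mul_zero, add_zero] at htouch
      rw [mul_add, mul_div_cancel₀ _ hsinθ.ne'] at htouch
      have := mul_pos hsinθ hE
      linarith
    · exact h
  have hx1 : x₀ < 1 := by
    rcases hx₀.2.eq_or_lt with h | h
    · exfalso
      rw [h, h1 t₀ ht₀.1, abs_zero] at htouch
      have := mul_pos (hφpos 1 (by simp)) (add_pos_of_nonneg_of_pos hA hE)
      linarith
    · exact h
  have hRt : ∀ x, Continuous fun t => R t x := fun x =>
    hRc.comp (by fun_prop : Continuous fun t : ℝ => (t, x))
  rcases le_total 0 (u t₀ x₀) with hpos | hneg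
  · rw [abs_of_nonneg hpos] at htouch
    exact no_touch hσ hε hεσ hq hA hK hH hm hc hbr hKH hφ hut hux huxx hRt hR heq hR0 ht0
      ⟨hx0, hx1⟩ hlt htouch
  · rw [abs_of_nonpos hneg] at htouch
    refine no_touch (u := fun t x => -u t x) (ut := fun t x => -ut t x)
      (ux := fun t x => -ux t x) (uxx := fun t x => -uxx t x) (R := fun t x => -R t x)
      hσ hε hεσ hq hA hK hH hm hc hbr hKH hφ (fun t x => (hut t x).neg)
      (fun t x => (hux t x).neg) (fun t x => (huxx t x).neg) (fun x => (hRt x).neg)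
      (fun t ht x hx => ((hR t ht x hx).neg).congr_deriv (by ring))
      (fun t x => by rw [heq]; ring) (fun x hx => by rw [abs_neg]; exact hR0 x hx) ht0
      ⟨hx0, hx1⟩ (fun t h0 h1 x hx => by rw [abs_neg]; exact hlt t h0 h1 x hx) htouch

/-! ### From the wave equation to the coupled system -/

/-- Interchange of derivatives for `g = g(t,x)`: if `∂g/∂t` has a continuous `x`-derivative `c`,
then `∂g/∂x` has `t`-derivative `c` on `(0,∞) × (0,1)`. The function `c` is assumed continuous
everywhere, but to be the derivative only on `[0,∞) × [0,1]`. -/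
theorem interchange {g gt c gx : ℝ → ℝ → ℝ}
    (hgx : ∀ t x, HasDerivAt (g t) (gx t x) x)
    (hgt : ∀ t x, HasDerivAt (fun τ => g τ x) (gt t x) t)
    (hgtc : Continuous (Function.uncurry gt))
    (hcc : Continuous (Function.uncurry c))
    (hc : ∀ t, 0 ≤ t → ∀ x ∈ Icc (0:ℝ) 1, HasDerivAt (gt t) (c t x) x)
    {t x : ℝ} (ht : 0 < t) (hx : x ∈ Ioo (0:ℝ) 1) :
    HasDerivAt (fun τ => gx τ x) (c t x) t := by
  have hgtx : ∀ y, Continuous fun τ => gt τ y := fun y =>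
    hgtc.comp (by fun_prop : Continuous fun τ : ℝ => (τ, y))
  have hcx : ∀ y, Continuous fun τ => c τ y := fun y =>
    hcc.comp (by fun_prop : Continuous fun τ : ℝ => (τ, y))
  have key : ∀ r, 0 ≤ r → gx r x = gx 0 x + ∫ τ in (0:ℝ)..r, c τ x := by
    intro r hr
    obtain ⟨C, hC⟩ := (isCompact_Icc (a := (0:ℝ)) (b := r)).prod
      (isCompact_Icc (a := (0:ℝ)) (b := 1)) |>.exists_bound_of_continuousOn hcc.continuousOn
    have h1 := (intervalIntegral.hasDerivAt_integral_of_dominated_loc_of_deriv_le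
      (μ := volume) (a := 0) (b := r) (F := fun y τ => gt τ y) (F' := fun y τ => c τ y)
      (x₀ := x) (s := Icc 0 1) (bound := fun _ => C) (Icc_mem_nhds hx.1 hx.2)
      (Eventually.of_forall fun y => (hgtx y).aestronglyMeasurable)
      ((hgtx x).intervalIntegrable _ _) (hcx x).aestronglyMeasurable
      (Eventually.of_forall fun τ hτ y hy => by
        rw [uIoc_of_le hr] at hτ
        exact hC (τ, y) ⟨⟨hτ.1.le, hτ.2⟩, hy⟩)
      intervalIntegrable_const
      (Eventually.of_forall fun τ hτ y hy => by
        rw [uIoc_of_le hr] at hτ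
        exact hc τ hτ.1.le y hy)).2
    have h2 : (fun y => ∫ τ in (0:ℝ)..r, gt τ y) = fun y => g r y - g 0 y := by
      funext y
      exact integral_eq_sub_of_hasDerivAt (fun τ _ => hgt τ y)
        ((hgtx y).intervalIntegrable _ _)
    rw [h2] at h1
    have := h1.unique ((hgx r x).sub (hgx 0 x))
    linarith
  have h3 : HasDerivAt (fun r => gx 0 x + ∫ τ in (0:ℝ)..r, c τ x) (c t x) t :=
    ((hcx x).integral_hasStrictDerivAt 0 t).hasDerivAt.const_add _
  refine h3.congr_of_eventuallyEq ?_
  filter_upwards [Ioi_mem_nhds ht] with r hr using key r (le_of_lt hr)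

lemma partials {f : ℝ → ℝ → ℝ} (hf : Differentiable ℝ (Function.uncurry f)) (t x : ℝ) :
    HasDerivAt (fun τ => f τ x) (fderiv ℝ (Function.uncurry f) (t, x) (1, 0)) t ∧
    HasDerivAt (f t) (fderiv ℝ (Function.uncurry f) (t, x) (0, 1)) x := by
  have h := (hf (t, x)).hasFDerivAt
  constructor
  · exact h.comp_hasDerivAt t ((hasDerivAt_id t).prodMk (hasDerivAt_const t x))
  · exact h.comp_hasDerivAt x ((hasDerivAt_const x t).prodMk (hasDerivAt_id x))

/-- For a classical solution, the quantity `R = u_t - σ u_xx + σ s u` satisfies the memory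
equation `R_t = -R/σ + s u`, so the barrier applies. -/
theorem solution_bound {σ μ a θ D : ℝ} (hσ : 0 < σ) {d : ℝ → ℝ} {u : ℝ → ℝ → ℝ}
    (hu : IsClassicalSolution σ μ d u) (hD : 0 ≤ D) (hdD : ∀ t, 0 ≤ t → |d t| ≤ D)
    (hθ : 0 < θ) (ha : 0 < a) (haθ : θ + a < π)
    (hc : 0 < a ^ 2 + (μ * σ - 1) / σ ^ 2 - |(μ * σ - 1) / σ ^ 2|) :
    ∃ K ε : ℝ, 0 < K ∧ 0 < ε ∧ ∀ t, 0 ≤ t → ∀ x ∈ Icc (0:ℝ) 1,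
      |u t x| ≤ D / sin θ + K * exp (-ε * t) := by
  obtain ⟨hC2, hutC2, hpde, hbc⟩ := hu
  set U := Function.uncurry u with hU
  set ut : ℝ → ℝ → ℝ := fun t x => fderiv ℝ U (t, x) (1, 0) with hutdef
  set ux : ℝ → ℝ → ℝ := fun t x => fderiv ℝ U (t, x) (0, 1) with huxdef
  have hfd : ContDiff ℝ 1 (fderiv ℝ U) := hC2.fderiv_right (by norm_num)
  have hutC : ContDiff ℝ 1 (Function.uncurry ut) := hfd.clm_apply contDiff_const
  have huxC : ContDiff ℝ 1 (Function.uncurry ux) := hfd.clm_apply contDiff_const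
  have hU1 := partials (f := u) (hC2.differentiable (by norm_num))
  have hut1 := partials (hutC.differentiable (by norm_num))
  have hux1 := partials (huxC.differentiable (by norm_num))
  set utt : ℝ → ℝ → ℝ := fun t x => fderiv ℝ (Function.uncurry ut) (t, x) (1, 0) with huttdef
  set utx : ℝ → ℝ → ℝ := fun t x => fderiv ℝ (Function.uncurry ut) (t, x) (0, 1) with hutxdef
  set uxx : ℝ → ℝ → ℝ := fun t x => fderiv ℝ (Function.uncurry ux) (t, x) (0, 1) with huxxdef
  have hsymm : ∀ t x, fderiv ℝ (Function.uncurry ux) (t, x) (1, 0) = utx t x := by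
    intro t x
    have hd2 : DifferentiableAt ℝ (fderiv ℝ U) (t, x) := hfd.differentiable (by norm_num) _
    have e : ∀ v w : ℝ × ℝ, fderiv ℝ (fun z => fderiv ℝ U z v) (t, x) w
        = fderiv ℝ (fderiv ℝ U) (t, x) w v := by
      intro v w
      rw [(hd2.hasFDerivAt.clm_apply (hasFDerivAt_const v (t, x))).fderiv]
      simp
    have hs : IsSymmSndFDerivAt ℝ U (t, x) :=
      hC2.contDiffAt.isSymmSndFDerivAt (by simp)
    exact (e (0, 1) (1, 0)).trans ((hs.eq _ _).trans (e (1, 0) (0, 1)).symm)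
  have huttc : Continuous (Function.uncurry utt) :=
    (hutC.continuous_fderiv (by norm_num)).clm_apply continuous_const
  have hutxc : Continuous (Function.uncurry utx) :=
    (hutC.continuous_fderiv (by norm_num)).clm_apply continuous_const
  have huxxc : Continuous (Function.uncurry uxx) :=
    (huxC.continuous_fderiv (by norm_num)).clm_apply continuous_const
  have e_ut : ∀ t x, u_t u t x = ut t x := fun t x => (hU1 t x).1.deriv
  have e_utt : ∀ t x, u_tt u t x = utt t x := fun t x => by
    have : deriv (fun τ => u τ x) = fun τ => ut τ x := funext fun τ => e_ut τ x
    rw [u_tt, this]; exact (hut1 t x).1.deriv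
  have e_uxx : ∀ t x, u_xx u t x = uxx t x := fun t x => by
    have : deriv (fun y => u t y) = ux t := funext fun y => (hU1 t y).2.deriv
    rw [u_xx, this]; exact (hux1 t x).2.deriv
  -- the value of `∂³u/∂t∂x²` dictated by the PDE, continuous on the whole plane
  set c : ℝ → ℝ → ℝ := fun t x => (utt t x - uxx t x + μ * ut t x) / σ with hcdef
  have hcc : Continuous (Function.uncurry c) :=
    ((huttc.sub huxxc).add (continuous_const.mul hutC.continuous)).div_const σ
  have hutxx : ∀ t, 0 ≤ t → ∀ x ∈ Icc (0:ℝ) 1, HasDerivAt (utx t) (c t x) x := by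
    intro t ht x hx
    have h1 : (fun y => u_t u t y) = ut t := funext fun y => e_ut t y
    have h2 : deriv (ut t) = utx t := funext fun y => (hut1 t y).2.deriv
    have h3 : ContDiff ℝ 1 (deriv (ut t)) := by
      have := hutC2 t ht
      rw [h1] at this
      exact ((contDiff_succ_iff_deriv (n := 1)).1 this).2.2
    rw [h2] at h3
    have h4 := (h3.differentiable (by norm_num) x).hasDerivAt
    have h5 := hpde t x ht hx
    rw [u_txx, h1, h2, e_utt, e_uxx, e_ut] at h5
    refine h4.congr_deriv ?_
    simp only [hcdef]
    rw [h5]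
    field_simp
    ring
  set s := (μ * σ - 1) / σ ^ 2 with hs
  set R : ℝ → ℝ → ℝ := fun t x => ut t x - σ * uxx t x + σ * s * u t x with hRdef
  have hRc : Continuous (Function.uncurry R) :=
    (hutC.continuous.sub (continuous_const.mul huxxc)).add
      (continuous_const.mul hC2.continuous)
  have hR : ∀ t, 0 < t → ∀ x ∈ Ioo (0:ℝ) 1,
      HasDerivAt (fun τ => R τ x) (-(R t x) / σ + s * u t x) t := by
    intro t ht x hx
    have h1 : HasDerivAt (fun τ => uxx τ x) (c t x) t :=
      interchange (g := ux) (gt := utx) (fun t x => (hux1 t x).2)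
        (fun t x => by rw [← hsymm]; exact (hux1 t x).1) hutxc hcc hutxx ht hx
    refine (((hut1 t x).1.sub (h1.const_mul σ)).add
      ((hU1 t x).1.const_mul (σ * s))).congr_deriv ?_
    change utt t x - σ * c t x + σ * s * ut t x = _
    simp only [hcdef, hRdef, hs]
    field_simp
    ring
  obtain ⟨K, ε, hK, hε, hb⟩ := barrier (ut := ut) (ux := ux) (uxx := uxx) (R := R)
    hσ hD hθ ha haθ hc hC2.continuous (fun t x => (hU1 t x).1) (fun t x => (hU1 t x).2)
    (fun t x => (hux1 t x).2) hRc hR (fun t x => by simp only [hRdef]; ring)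
    (fun t ht => by rw [(hbc t ht).1]; exact hdD t ht) (fun t ht => (hbc t ht).2)
  refine ⟨K, ε, hK, hε, fun t ht x hx => (hb t ht x hx).le.trans ?_⟩
  have hsθ : 0 < sin θ := sin_pos_of_pos_of_lt_pi hθ (by linarith)
  exact mul_le_of_le_one_left (by positivity) (sin_le_one _)

/-! ### The asymptotic gain -/

/-- upper bound `g((μσ−1)/σ²)` for the asymptotic gain in the spatial
sup norm, under the condition `2 < 2μσ + σ²π²`. -/
theorem asymptotic_gain_sup_upper_bound
    (σ μ : ℝ) (hσ : 0 < σ) (hμ : 0 ≤ μ) (hcond : 2 < 2 * μ * σ + σ ^ 2 * π ^ 2)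
    (d : ℝ → ℝ) (hd : BddC2 d)
    (u : ℝ → ℝ → ℝ) (hu : IsClassicalSolution σ μ d u) :
    Filter.limsup (fun t => supNorm u t) Filter.atTop ≤
      gfun ((μ * σ - 1) / σ ^ 2) * supD d := by
  set s := (μ * σ - 1) / σ ^ 2 with hs
  obtain ⟨M, hM⟩ := hd.2
  have hdD : ∀ t, 0 ≤ t → |d t| ≤ supD d := fun t ht =>
    le_csSup ⟨M, by rintro _ ⟨r, hr, rfl⟩; exact hM r hr⟩ ⟨t, ht, rfl⟩
  have hD : 0 ≤ supD d := (abs_nonneg _).trans (hdD 0 le_rfl)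
  have hsup0 : ∀ t, 0 ≤ supNorm u t := fun t =>
    Real.sSup_nonneg (by rintro _ ⟨x, _, rfl⟩; exact abs_nonneg _)
  have habs : 0 ≤ |s| - s := by linarith [le_abs_self s]
  have key : ∀ θ, 0 < θ → θ < π - √(|s| - s) →
      limsup (fun t => supNorm u t) atTop ≤ 1 / (sin θ * (1 - pfun s θ)) * supD d := by
    intro θ hθ hθ'
    have hr := Real.sqrt_nonneg (|s| - s)
    have hsθ : 0 < sin θ := sin_pos_of_pos_of_lt_pi hθ (by linarith)
    -- a frequency strictly below `π - θ`, so that `θ + a < π`, with still `a² > |s| - s`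
    obtain ⟨a, ha1, ha2⟩ := exists_between (show √(|s| - s) < π - θ by linarith)
    have hsq := Real.sq_sqrt habs
    have hc : 0 < a ^ 2 + s - |s| := by nlinarith
    obtain ⟨K, ε, hK, hε, hb⟩ := solution_bound hσ hu hD hdD hθ (hr.trans_lt ha1)
      (by linarith) hc
    have hlim : Tendsto (fun t => supD d / sin θ + K * exp (-ε * t)) atTop
        (nhds (supD d / sin θ)) := by
      have h1 : Tendsto (fun t : ℝ => exp (-ε * t)) atTop (nhds 0) :=
        tendsto_exp_atBot.comp (tendsto_id.const_mul_atTop_of_neg (by linarith))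
      simpa using (h1.const_mul K).const_add (supD d / sin θ)
    have h2 : limsup (fun t => supNorm u t) atTop ≤ supD d / sin θ := by
      rw [← hlim.limsup_eq]
      refine limsup_le_limsup ?_ ?_ hlim.isBoundedUnder_le
      · filter_upwards [eventually_ge_atTop 0] with t ht
        refine csSup_le ⟨_, 0, by simp, rfl⟩ ?_
        rintro _ ⟨x, hx, rfl⟩
        exact hb t ht x hx
      · exact (isBoundedUnder_of ⟨0, hsup0⟩ :
          IsBoundedUnder (· ≥ ·) atTop (fun t => supNorm u t)).isCoboundedUnder_le
    have hden : |s| < s + (π - θ) ^ 2 := by nlinarith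
    have hp1 : pfun s θ < 1 := (div_lt_one ((abs_nonneg s).trans_lt hden)).2 hden
    have hp0 : 0 ≤ pfun s θ := div_nonneg (abs_nonneg s) ((abs_nonneg s).trans_lt hden).le
    refine h2.trans ?_
    rw [div_eq_mul_one_div, mul_comm]
    refine mul_le_mul_of_nonneg_right ?_ hD
    apply one_div_le_one_div_of_le
    · exact mul_pos hsθ (by linarith)
    · exact mul_le_of_le_one_right hsθ.le (by linarith)
  have hlt : √(|s| - s) < π := by
    rw [Real.sqrt_lt' pi_pos]
    have hpi := pi_pos
    rcases abs_cases s with ⟨h, _⟩ | ⟨h, _⟩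
    · rw [h]; simp; positivity
    · rw [h]
      have : σ ^ 2 * s = μ * σ - 1 := by rw [hs]; field_simp
      have h3 : 0 < σ ^ 2 * (π ^ 2 - (-s - s)) := by nlinarith
      have := pos_of_mul_pos_right h3 (by positivity)
      linarith
  obtain ⟨θ₀, h1, h2⟩ := exists_between (show 0 < π - √(|s| - s) by linarith)
  rcases hD.eq_or_lt with h | h
  · have := key θ₀ h1 h2
    rw [← h, mul_zero] at this ⊢
    exact this
  · rw [← div_le_iff₀ h]
    refine le_csInf ⟨_, θ₀, h1, h2, rfl⟩ ?_
    rintro _ ⟨θ, hθ, hθ', rfl⟩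
    rw [div_le_iff₀ h]
    exact key θ hθ hθ'
end
end

section
/- Let σ > 0 and μ ≥ 0 be constants. For each ω > 0 define r := ω√((μσ−1)²ω² + (μ+σω²)²)/(1+σ²ω²), let θ ∈ (0,π) be the unique angle with cos(θ) = (μσ−1)ω²/((1+σ²ω²)r) and sin(θ) = (μ+σω²)ω/((1+σ²ω²)r), and set a := √r·cos(θ/2), b := √r·sin(θ/2). Suppose γ ≥ 0 is a constant such that for every bounded d ∈ C²([0,∞);ℝ) and every classical solution u of the damped wave system with boundary input d one has limsup_{t→+∞} ( max_{x∈[0,1]} |u(t,x)| ) ≤ γ · sup_{t≥0} |d(t)|. Then γ ≥ sup_{ω>0} √( max_{x∈[0,1]} (cosh(2ax) − cos(2bx)) / (cosh(2a) − cos(2b)) ). -/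
/-! The bound is attained by time-periodic solutions. For a frequency `ω > 0` the number
`k = a + ib` satisfies `(1 + iσω) k² = -ω² + iμω`, which makes
`u(t, x) = Re (e^{iωt} sinh (k (1 - x)) / sinh k)` a classical solution with boundary input
`d(t) = cos (ωt)`, whose supremum is `1`. At every point `x` the value `|u(t, x)|` returns, at
arbitrarily large times, to the amplitude `‖sinh (k (1 - x))‖ / ‖sinh k‖`. Hence `γ` is at least
this amplitude, and the claim is the identity `2 ‖sinh (k y)‖² = cosh (2ay) - cos (2by)`. -/

open Real Filter MeasureTheory intervalIntegral Set

noncomputable section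

/-- `r := ω√((μσ−1)²ω² + (μ+σω²)²)/(1+σ²ω²)`. -/
def rfreq (σ μ ω : ℝ) : ℝ :=
  ω * Real.sqrt ((μ * σ - 1) ^ 2 * ω ^ 2 + (μ + σ * ω ^ 2) ^ 2) / (1 + σ ^ 2 * ω ^ 2)

/-- The unique angle `θ ∈ (0,π)` with `cos(θ) = (μσ−1)ω²/((1+σ²ω²)r)` and
`sin(θ) = (μ+σω²)ω/((1+σ²ω²)r)`; since the sine is positive it is given by `arccos`. -/
def θfreq (σ μ ω : ℝ) : ℝ :=
  Real.arccos ((μ * σ - 1) * ω ^ 2 / ((1 + σ ^ 2 * ω ^ 2) * rfreq σ μ ω))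

/-- `a := √r·cos(θ/2)`. -/
def afreq (σ μ ω : ℝ) : ℝ := Real.sqrt (rfreq σ μ ω) * Real.cos (θfreq σ μ ω / 2)

/-- `b := √r·sin(θ/2)`. -/
def bfreq (σ μ ω : ℝ) : ℝ := Real.sqrt (rfreq σ μ ω) * Real.sin (θfreq σ μ ω / 2)

/-- The separated mode `Re (c e^{iωt} sinh (k (1 - x)))`. -/
def mode (ω : ℝ) (k c : ℂ) (t x : ℝ) : ℝ :=
  (c * Complex.exp (Complex.I * ω * t) * Complex.sinh (k * (1 - x))).re

/-- Differentiating in time multiplies the coefficient of a mode by `iω`. -/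
lemma deriv_mode_t (ω : ℝ) (k c : ℂ) (x : ℝ) :
    deriv (fun τ => mode ω k c τ x) = fun τ => mode ω k (Complex.I * ω * c) τ x := by
  funext t
  have h0 : HasDerivAt (fun τ : ℝ => (τ : ℂ)) 1 t := Complex.ofRealCLM.hasDerivAt
  have h1 : HasDerivAt
      (fun τ : ℝ => c * Complex.exp (Complex.I * ω * τ) * Complex.sinh (k * (1 - x)))
      (Complex.I * ω * c * Complex.exp (Complex.I * ω * t) * Complex.sinh (k * (1 - x))) t := by
    have := (((h0.const_mul (Complex.I * ω)).cexp).const_mul c).mul_const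
      (Complex.sinh (k * (1 - x)))
    exact this.congr_deriv (by ring)
  exact (Complex.reCLM.hasFDerivAt.comp_hasDerivAt t h1).deriv

/-- Two space derivatives multiply the coefficient of a mode by `k²`. -/
lemma deriv_mode_xx (ω : ℝ) (k c : ℂ) (t : ℝ) :
    deriv (deriv (fun y => mode ω k c t y)) = fun y => mode ω k (k ^ 2 * c) t y := by
  have h0 : ∀ x : ℝ, HasDerivAt (fun y : ℝ => k * (1 - (y : ℂ))) (-k) x := fun x => by
    have h : HasDerivAt (fun τ : ℝ => (τ : ℂ)) 1 x := Complex.ofRealCLM.hasDerivAt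
    exact ((h.const_sub 1).const_mul k).congr_deriv (by ring)
  have h1 : deriv (fun y => mode ω k c t y) = fun y : ℝ =>
      (-k * c * Complex.exp (Complex.I * ω * t) * Complex.cosh (k * (1 - y))).re := by
    funext x
    have h2 : HasDerivAt
        (fun y : ℝ => c * Complex.exp (Complex.I * ω * t) * Complex.sinh (k * (1 - y)))
        (-k * c * Complex.exp (Complex.I * ω * t) * Complex.cosh (k * (1 - x))) x := by
      exact (((Complex.hasDerivAt_sinh _).comp x (h0 x)).const_mul
        (c * Complex.exp (Complex.I * ω * t))).congr_deriv (by ring)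
    exact (Complex.reCLM.hasFDerivAt.comp_hasDerivAt x h2).deriv
  rw [h1]
  funext x
  have h2 : HasDerivAt
      (fun y : ℝ => -k * c * Complex.exp (Complex.I * ω * t) * Complex.cosh (k * (1 - y)))
      (k ^ 2 * c * Complex.exp (Complex.I * ω * t) * Complex.sinh (k * (1 - x))) x := by
    exact (((Complex.hasDerivAt_cosh _).comp x (h0 x)).const_mul
      (-k * c * Complex.exp (Complex.I * ω * t))).congr_deriv (by ring)
  exact (Complex.reCLM.hasFDerivAt.comp_hasDerivAt x h2).deriv

lemma contDiff_mode (ω : ℝ) (k c : ℂ) : ContDiff ℝ 2 (Function.uncurry (mode ω k c)) := by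
  have hs : ContDiff ℝ 2 Complex.sinh := Complex.contDiff_sinh.restrict_scalars ℝ
  have he : ContDiff ℝ 2 Complex.exp := Complex.contDiff_exp
  have ho : ContDiff ℝ 2 (fun x : ℝ => (x : ℂ)) := Complex.ofRealCLM.contDiff
  have h1 : ContDiff ℝ 2 (fun p : ℝ × ℝ => (p.1 : ℂ)) := ho.comp contDiff_fst
  have h2 : ContDiff ℝ 2 (fun p : ℝ × ℝ => (p.2 : ℂ)) := ho.comp contDiff_snd
  exact Complex.reCLM.contDiff.comp
    ((contDiff_const.mul (he.comp (contDiff_const.mul h1))).mul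
      (hs.comp (contDiff_const.mul (contDiff_const.sub h2))))

lemma mode_isClassicalSolution {σ μ ω : ℝ} {k : ℂ}
    (hk : k ^ 2 * (1 + Complex.I * σ * ω) = -ω ^ 2 + Complex.I * μ * ω)
    (hs : Complex.sinh k ≠ 0) :
    IsClassicalSolution σ μ (fun t => Real.cos (ω * t)) (mode ω k (Complex.sinh k)⁻¹) := by
  have hut : ∀ t x, u_t (mode ω k (Complex.sinh k)⁻¹) t x
      = mode ω k (Complex.I * ω * (Complex.sinh k)⁻¹) t x := fun t x =>
    congrFun (deriv_mode_t ω k _ x) t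
  refine ⟨contDiff_mode _ _ _, fun t _ => ?_, fun t x _ _ => ?_, fun t _ => ⟨?_, ?_⟩⟩
  · simp only [hut]
    exact (contDiff_mode ω k _).comp (contDiff_const.prodMk contDiff_id)
  · simp only [u_tt, u_txx, u_xx, hut, deriv_mode_t, deriv_mode_xx]
    simp only [mode]
    rw [← Complex.re_ofReal_mul, ← Complex.re_ofReal_mul, ← Complex.add_re, ← Complex.sub_re]
    congr 1
    linear_combination (-(Complex.sinh k)⁻¹ * Complex.exp (Complex.I * ω * t)
      * Complex.sinh (k * (1 - x))) * hk
      + ω ^ 2 * (Complex.sinh k)⁻¹ * Complex.exp (Complex.I * ω * t)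
      * Complex.sinh (k * (1 - x)) * Complex.I_sq
  · have : (Complex.sinh k)⁻¹ * Complex.exp (Complex.I * ω * t) * Complex.sinh (k * (1 - (0:ℝ)))
        = Complex.exp ((ω * t : ℝ) * Complex.I) := by
      push_cast
      rw [sub_zero, mul_one, mul_right_comm, inv_mul_cancel₀ hs, one_mul]
      ring_nf
    simp only [mode]
    rw [this, Complex.exp_ofReal_mul_I_re]
  · simp [mode]

lemma supD_cos (ω : ℝ) : supD (fun t => Real.cos (ω * t)) ≤ 1 := by
  refine Real.sSup_le ?_ zero_le_one
  rintro _ ⟨t, -, rfl⟩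
  exact Real.abs_cos_le_one _

/-- The supremum norm of a mode is frequently at least its amplitude at any given point: the mode
equals its amplitude whenever the phase `ωt` cancels the argument of the coefficient. -/
lemma amplitude_le_limsup {ω : ℝ} (hω : 0 < ω) (k c : ℂ) {x : ℝ} (hx : x ∈ Icc (0:ℝ) 1) :
    ‖c * Complex.sinh (k * (1 - x))‖ ≤ limsup (fun t => supNorm (mode ω k c) t) atTop := by
  have hcont : Continuous fun y : ℝ => ‖c‖ * ‖Complex.sinh (k * (1 - y))‖ := by fun_prop
  obtain ⟨M, hM⟩ := (isCompact_Icc (a := (0:ℝ)) (b := 1)).exists_bound_of_continuousOn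
    hcont.continuousOn
  have hexp : ∀ t : ℝ, ‖Complex.exp (Complex.I * ω * t)‖ = 1 := fun t => by
    rw [show Complex.I * ω * t = ((ω * t : ℝ) : ℂ) * Complex.I by push_cast; ring]
    exact Complex.norm_exp_ofReal_mul_I _
  have hbd : ∀ t : ℝ, ∀ y ∈ Icc (0:ℝ) 1, |mode ω k c t y| ≤ M := fun t y hy => by
    refine (Complex.abs_re_le_norm _).trans ?_
    rw [norm_mul, norm_mul, hexp, mul_one]
    exact (le_abs_self _).trans (hM y hy)
  have hM0 : 0 ≤ M := (abs_nonneg _).trans (hbd 0 x hx)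
  have hsup : ∀ t, supNorm (mode ω k c) t ≤ M := fun t => by
    refine Real.sSup_le ?_ hM0
    rintro _ ⟨y, hy, rfl⟩
    exact hbd t y hy
  refine le_limsup_of_frequently_le ?_ (isBoundedUnder_of ⟨M, hsup⟩)
  rw [frequently_atTop]
  intro T
  set z := c * Complex.sinh (k * (1 - x)) with hz
  obtain ⟨n, hn⟩ := exists_nat_ge ((ω * T + z.arg) / (2 * π))
  rw [div_le_iff₀ (by positivity)] at hn
  refine ⟨(n * (2 * π) - z.arg) / ω, ?_, ?_⟩
  · rw [le_div_iff₀ hω]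
    linarith
  have hval : mode ω k c ((n * (2 * π) - z.arg) / ω) x = ‖z‖ := by
    have hω' : (ω : ℂ) ≠ 0 := by exact_mod_cast hω.ne'
    have h1 : Complex.exp (Complex.I * ω * (((n * (2 * π) - z.arg) / ω : ℝ) : ℂ))
        = Complex.exp (-(z.arg * Complex.I)) := by
      rw [← Complex.exp_periodic.nat_mul n (-(z.arg * Complex.I))]
      congr 1
      push_cast
      field_simp
      ring
    have h2 : z * Complex.exp (-(z.arg * Complex.I)) = ‖z‖ := by
      nth_rw 1 [← Complex.norm_mul_exp_arg_mul_I z]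
      rw [mul_assoc, ← Complex.exp_add]
      simp
    simp only [mode]
    rw [h1, mul_right_comm, ← hz, h2, Complex.ofReal_re]
  refine le_csSup ⟨M, ?_⟩ ⟨x, hx, ?_⟩
  · rintro _ ⟨y, hy, rfl⟩
    exact hbd _ y hy
  · rw [hval, abs_of_nonneg (norm_nonneg _)]

lemma two_mul_norm_sinh_sq (a b y : ℝ) :
    2 * ‖Complex.sinh ((a + b * Complex.I) * y)‖ ^ 2
      = Real.cosh (2 * a * y) - Real.cos (2 * b * y) := by
  rw [show (a + b * Complex.I) * y = ((a * y : ℝ) : ℂ) + ((b * y : ℝ) : ℂ) * Complex.I by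
    push_cast; ring, Complex.sinh_add, Complex.sinh_mul_I, Complex.cosh_mul_I,
    ← Complex.ofReal_sinh, ← Complex.ofReal_cosh, ← Complex.ofReal_sin, ← Complex.ofReal_cos,
    ← mul_assoc, ← Complex.ofReal_mul, ← Complex.ofReal_mul, Complex.sq_norm,
    Complex.normSq_add_mul_I, show 2 * a * y = 2 * (a * y) by ring,
    show 2 * b * y = 2 * (b * y) by ring, Real.cosh_two_mul, Real.cos_two_mul]
  have h1 := Real.cosh_sq (a * y)
  have h2 := Real.sin_sq (b * y)
  rw [mul_pow, mul_pow, h1, h2]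
  ring

lemma rfreq_pos {σ μ ω : ℝ} (hσ : 0 < σ) (hμ : 0 ≤ μ) (hω : 0 < ω) : 0 < rfreq σ μ ω := by
  unfold rfreq
  positivity

lemma rfreq_sq (σ μ ω : ℝ) :
    ((1 + σ ^ 2 * ω ^ 2) * rfreq σ μ ω) ^ 2
      = ((μ * σ - 1) * ω ^ 2) ^ 2 + ((μ + σ * ω ^ 2) * ω) ^ 2 := by
  have h : (1 + σ ^ 2 * ω ^ 2) ≠ 0 := by positivity
  unfold rfreq
  rw [mul_div_cancel₀ _ h, mul_pow, Real.sq_sqrt (by positivity)]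
  ring

lemma cos_θfreq {σ μ ω : ℝ} (hσ : 0 < σ) (hμ : 0 ≤ μ) (hω : 0 < ω) :
    Real.cos (θfreq σ μ ω) = (μ * σ - 1) * ω ^ 2 / ((1 + σ ^ 2 * ω ^ 2) * rfreq σ μ ω) := by
  have hr := rfreq_pos hσ hμ hω
  have hR : 0 < (1 + σ ^ 2 * ω ^ 2) * rfreq σ μ ω := by positivity
  have h := abs_le_of_sq_le_sq' (a := (μ * σ - 1) * ω ^ 2)
    (by rw [rfreq_sq]; nlinarith [sq_nonneg ((μ + σ * ω ^ 2) * ω)]) hR.le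
  refine Real.cos_arccos ?_ ?_
  · rw [le_div_iff₀ hR]; linarith [h.1]
  · rw [div_le_iff₀ hR]; linarith [h.2]

lemma sin_θfreq {σ μ ω : ℝ} (hσ : 0 < σ) (hμ : 0 ≤ μ) (hω : 0 < ω) :
    Real.sin (θfreq σ μ ω) = (μ + σ * ω ^ 2) * ω / ((1 + σ ^ 2 * ω ^ 2) * rfreq σ μ ω) := by
  have hr := rfreq_pos hσ hμ hω
  have hR : 0 < (1 + σ ^ 2 * ω ^ 2) * rfreq σ μ ω := by positivity
  have h0 : 0 ≤ Real.sin (θfreq σ μ ω) :=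
    Real.sin_nonneg_of_nonneg_of_le_pi (Real.arccos_nonneg _) (Real.arccos_le_pi _)
  rw [← sq_eq_sq₀ h0 (by positivity), Real.sin_sq, cos_θfreq hσ hμ hω, div_pow, div_pow,
    eq_div_iff (by positivity), sub_mul, div_mul_cancel₀ _ (by positivity), rfreq_sq]
  ring

lemma afreq_pos {σ μ ω : ℝ} (hσ : 0 < σ) (hμ : 0 ≤ μ) (hω : 0 < ω) : 0 < afreq σ μ ω := by
  have hr := rfreq_pos hσ hμ hω
  have hs : 0 < Real.sin (θfreq σ μ ω) := by rw [sin_θfreq hσ hμ hω]; positivity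
  have h0 : 0 ≤ θfreq σ μ ω := Real.arccos_nonneg _
  have hne : θfreq σ μ ω ≠ π := fun h => by simp [h] at hs
  have hlt : θfreq σ μ ω < π := lt_of_le_of_ne (Real.arccos_le_pi _) hne
  exact mul_pos (Real.sqrt_pos.2 hr)
    (Real.cos_pos_of_mem_Ioo ⟨by linarith [Real.pi_pos], by linarith⟩)

/-- `k = a + ib` solves the dispersion relation obtained by inserting `e^{iωt ± kx}` into the
equation. -/
lemma dispersion {σ μ ω : ℝ} (hσ : 0 < σ) (hμ : 0 ≤ μ) (hω : 0 < ω) :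
    ((afreq σ μ ω : ℂ) + bfreq σ μ ω * Complex.I) ^ 2 * (1 + Complex.I * σ * ω)
      = -ω ^ 2 + Complex.I * μ * ω := by
  have hr := rfreq_pos hσ hμ hω
  have hq : 0 < 1 + σ ^ 2 * ω ^ 2 := by positivity
  have hsq := Real.sq_sqrt hr.le
  have hre : (afreq σ μ ω ^ 2 - bfreq σ μ ω ^ 2) * (1 + σ ^ 2 * ω ^ 2)
      = (μ * σ - 1) * ω ^ 2 := by
    have : afreq σ μ ω ^ 2 - bfreq σ μ ω ^ 2 = rfreq σ μ ω * Real.cos (θfreq σ μ ω) := by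
      have h2 := Real.cos_two_mul' (θfreq σ μ ω / 2)
      rw [mul_div_cancel₀ _ two_ne_zero] at h2
      rw [h2, afreq, bfreq, mul_pow, mul_pow, hsq]
      ring
    rw [this, cos_θfreq hσ hμ hω]
    field_simp
  have him : 2 * afreq σ μ ω * bfreq σ μ ω * (1 + σ ^ 2 * ω ^ 2)
      = (μ + σ * ω ^ 2) * ω := by
    have : 2 * afreq σ μ ω * bfreq σ μ ω = rfreq σ μ ω * Real.sin (θfreq σ μ ω) := by
      have h2 := Real.sin_two_mul (θfreq σ μ ω / 2)
      rw [mul_div_cancel₀ _ two_ne_zero] at h2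
      rw [h2, afreq, bfreq]
      linear_combination (2 * Real.cos (θfreq σ μ ω / 2) * Real.sin (θfreq σ μ ω / 2)) * hsq
    rw [this, sin_θfreq hσ hμ hω]
    field_simp
  generalize afreq σ μ ω = a at *
  generalize bfreq σ μ ω = b at *
  have e1 : a ^ 2 - b ^ 2 - 2 * a * b * σ * ω = -ω ^ 2 := by
    apply mul_right_cancel₀ hq.ne'
    linear_combination hre - σ * ω * him
  have e2 : 2 * a * b + (a ^ 2 - b ^ 2) * σ * ω = μ * ω := by
    apply mul_right_cancel₀ hq.ne'
    linear_combination him + σ * ω * hre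
  have e1' : (a : ℂ) ^ 2 - b ^ 2 - 2 * a * b * σ * ω = -ω ^ 2 := by exact_mod_cast e1
  have e2' : 2 * (a : ℂ) * b + (a ^ 2 - b ^ 2) * σ * ω = μ * ω := by exact_mod_cast e2
  linear_combination e1' + Complex.I * e2' + (b ^ 2 + 2 * a * b * σ * ω
    + b ^ 2 * Complex.I * σ * ω) * Complex.I_sq

/-- any asymptotic-gain constant `γ` for the spatial sup norm satisfies
`γ ≥ sup_{ω>0} √( max_{x∈[0,1]} (cosh(2ax) − cos(2bx)) / (cosh(2a) − cos(2b)) )`. -/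
theorem asymptotic_gain_sup_lower_bound
    (σ μ : ℝ) (hσ : 0 < σ) (hμ : 0 ≤ μ)
    (γ : ℝ) (hγ : 0 ≤ γ)
    (hgain : ∀ (d : ℝ → ℝ) (u : ℝ → ℝ → ℝ), BddC2 d → IsClassicalSolution σ μ d u →
      Filter.limsup (fun t => supNorm u t) Filter.atTop ≤ γ * supD d) :
    γ ≥ sSup {y : ℝ | ∃ ω : ℝ, 0 < ω ∧
      y = Real.sqrt
        ((sSup {z : ℝ | ∃ x ∈ Set.Icc (0:ℝ) 1,
            z = Real.cosh (2 * afreq σ μ ω * x) - Real.cos (2 * bfreq σ μ ω * x)}) /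
          (Real.cosh (2 * afreq σ μ ω) - Real.cos (2 * bfreq σ μ ω)))} := by
  refine Real.sSup_le ?_ hγ
  rintro _ ⟨ω, hω, rfl⟩
  have ha := afreq_pos hσ hμ hω
  have hk := dispersion hσ hμ hω
  generalize afreq σ μ ω = a at *
  generalize bfreq σ μ ω = b at *
  have hD : 0 < Real.cosh (2 * a) - Real.cos (2 * b) := by
    have h1 : 1 < Real.cosh (2 * a) := Real.one_lt_cosh.2 (by positivity)
    linarith [Real.cos_le_one (2 * b)]
  have hk1 := two_mul_norm_sinh_sq a b 1
  rw [mul_one, mul_one, Complex.ofReal_one, mul_one] at hk1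
  have hs : 0 < ‖Complex.sinh (a + b * Complex.I)‖ := by
    refine lt_of_le_of_ne (norm_nonneg _) fun h => ?_
    rw [← h] at hk1
    linarith
  have hlim := hgain (fun t => Real.cos (ω * t)) _
    ⟨by fun_prop, 1, fun t _ => Real.abs_cos_le_one _⟩
    (mode_isClassicalSolution hk (norm_pos_iff.1 hs))
  refine Real.sqrt_le_left hγ |>.2 ?_
  rw [div_le_iff₀ hD]
  refine Real.sSup_le ?_ (by positivity)
  rintro _ ⟨x, hx, rfl⟩
  have hamp := amplitude_le_limsup hω (a + b * Complex.I)
    (Complex.sinh (a + b * Complex.I))⁻¹ (x := 1 - x) ⟨by linarith [hx.2], by linarith [hx.1]⟩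
  have hγ' := hamp.trans (hlim.trans (mul_le_mul_of_nonneg_left (supD_cos ω) hγ))
  rw [mul_one, Complex.ofReal_sub, Complex.ofReal_one, sub_sub_cancel, norm_mul, norm_inv,
    inv_mul_le_iff₀ hs] at hγ'
  have hsq := pow_le_pow_left₀ (norm_nonneg _) hγ' 2
  rw [← two_mul_norm_sinh_sq, ← hk1]
  linarith [mul_pow ‖Complex.sinh (a + b * Complex.I)‖ γ 2]
end
end

section
/- Let σ > 0 and μ ≥ 0 be constants with μσ = 1. Then: (i) for every bounded d ∈ C²([0,∞);ℝ) and every classical solution u of the damped wave system with boundary input d, limsup_{t→+∞} ( max_{x∈[0,1]} |u(t,x)| ) ≤ sup_{t≥0} |d(t)|; and (ii) if γ ≥ 0 is any constant such that limsup_{t→+∞} ( max_{x∈[0,1]} |u(t,x)| ) ≤ γ · sup_{t≥0} |d(t)| holds for every bounded d ∈ C²([0,∞);ℝ) and every classical solution u with boundary input d, then γ ≥ 1. In other words, the asymptotic gain of the displacement in the spatial sup norm equals 1. -/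
/-!
The condition `μσ = 1` factors the equation. For `v = ∂u/∂t - σ ∂²u/∂x²` the wave equation reads
`∂v/∂t = -μ v`, so that `∂u/∂t = σ ∂²u/∂x² + e^{-μt} v₀(x)` on `(0,1)`: the displacement solves a heat
equation with exponentially decaying forcing (`forced_heat_equation`). Since only
`x ↦ ∂u/∂t(t,x)` is assumed to be `C²`, the third derivative `∂ₜ∂ₓ²u` is handled in integrated
form (`u_xx_eq_integral`): `∂u/∂x` is `C¹`, its time derivative is `∂ₓ∂ₜu`, and the equation
itself shows that `∂ₓ²∂ₜu` agrees with a continuous function on `[0,∞) × [0,1]`.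

The parabolic maximum principle (`pos_of_strict_supersolution`) then compares `±u` with
`S + A e^{-λt} (2 - x²)`, where `S = sup |d|` and `λ = min(μ, σ/2)`. This is a strict supersolution
for large `A`, whence `|u| ≤ S + 2 A e^{-λt}` and the gain is at most `1`. The stationary
solution `u(t,x) = 1 - x` with input `d = 1` shows that no smaller gain is possible.
-/

open Real Filter MeasureTheory intervalIntegral Set

noncomputable section

/-! ### Partial derivatives of `C²` functions of two variables -/

/-- The space derivative `∂u/∂x`. -/
def u_x (u : ℝ → ℝ → ℝ) (t x : ℝ) : ℝ := deriv (fun y => u t y) x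

lemma hasDerivAt_slice_left {f : ℝ × ℝ → ℝ} {t x : ℝ} (hf : DifferentiableAt ℝ f (t, x)) :
    HasDerivAt (fun τ => f (τ, x)) (fderiv ℝ f (t, x) (1, 0)) t :=
  hf.hasFDerivAt.comp_hasDerivAt t ((hasDerivAt_id t).prodMk (hasDerivAt_const t x))

lemma hasDerivAt_slice_right {f : ℝ × ℝ → ℝ} {t x : ℝ} (hf : DifferentiableAt ℝ f (t, x)) :
    HasDerivAt (fun y => f (t, y)) (fderiv ℝ f (t, x) (0, 1)) x :=
  hf.hasFDerivAt.comp_hasDerivAt x ((hasDerivAt_const x t).prodMk (hasDerivAt_id x))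

section Partial

variable {u : ℝ → ℝ → ℝ}

lemma u_t_eq (h : ContDiff ℝ 2 (Function.uncurry u)) (t x : ℝ) :
    u_t u t x = fderiv ℝ (Function.uncurry u) (t, x) (1, 0) :=
  (hasDerivAt_slice_left (h.differentiable (by norm_num) (t, x))).deriv

lemma u_x_eq (h : ContDiff ℝ 2 (Function.uncurry u)) (t x : ℝ) :
    u_x u t x = fderiv ℝ (Function.uncurry u) (t, x) (0, 1) :=
  (hasDerivAt_slice_right (h.differentiable (by norm_num) (t, x))).deriv

lemma contDiff_u_t (h : ContDiff ℝ 2 (Function.uncurry u)) :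
    ContDiff ℝ 1 (Function.uncurry (u_t u)) := by
  have : Function.uncurry (u_t u) = fun p => fderiv ℝ (Function.uncurry u) p (1, 0) := by
    ext ⟨t, x⟩; exact u_t_eq h t x
  rw [this]
  exact (h.fderiv_right (m := 1) (by norm_num)).clm_apply contDiff_const

lemma contDiff_u_x (h : ContDiff ℝ 2 (Function.uncurry u)) :
    ContDiff ℝ 1 (Function.uncurry (u_x u)) := by
  have : Function.uncurry (u_x u) = fun p => fderiv ℝ (Function.uncurry u) p (0, 1) := by
    ext ⟨t, x⟩; exact u_x_eq h t x
  rw [this]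
  exact (h.fderiv_right (m := 1) (by norm_num)).clm_apply contDiff_const

lemma hasDerivAt_u_time (h : ContDiff ℝ 2 (Function.uncurry u)) (t x : ℝ) :
    HasDerivAt (fun τ => u τ x) (u_t u t x) t := by
  rw [u_t_eq h]
  exact hasDerivAt_slice_left (h.differentiable (by norm_num) (t, x))

lemma hasDerivAt_u_space (h : ContDiff ℝ 2 (Function.uncurry u)) (t x : ℝ) :
    HasDerivAt (fun y => u t y) (u_x u t x) x := by
  rw [u_x_eq h]
  exact hasDerivAt_slice_right (h.differentiable (by norm_num) (t, x))

lemma hasDerivAt_u_t_time (h : ContDiff ℝ 2 (Function.uncurry u)) (t x : ℝ) :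
    HasDerivAt (fun τ => u_t u τ x) (u_tt u t x) t :=
  (hasDerivAt_slice_left (f := Function.uncurry (u_t u))
    ((contDiff_u_t h).differentiable (by norm_num) (t, x))).differentiableAt.hasDerivAt

lemma hasDerivAt_u_x_space (h : ContDiff ℝ 2 (Function.uncurry u)) (t x : ℝ) :
    HasDerivAt (fun y => u_x u t y) (u_xx u t x) x :=
  (hasDerivAt_slice_right (f := Function.uncurry (u_x u))
    ((contDiff_u_x h).differentiable (by norm_num) (t, x))).differentiableAt.hasDerivAt

lemma continuous_u_tt (h : ContDiff ℝ 2 (Function.uncurry u)) :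
    Continuous (fun p : ℝ × ℝ => u_tt u p.1 p.2) := by
  have : (fun p : ℝ × ℝ => u_tt u p.1 p.2) =
      fun p => fderiv ℝ (Function.uncurry (u_t u)) p (1, 0) := by
    ext ⟨t, x⟩
    exact (hasDerivAt_u_t_time h t x).unique (hasDerivAt_slice_left (f := Function.uncurry (u_t u))
      ((contDiff_u_t h).differentiable (by norm_num) (t, x)))
  rw [this]
  exact ((contDiff_u_t h).continuous_fderiv (by norm_num)).clm_apply continuous_const

lemma continuous_u_xx (h : ContDiff ℝ 2 (Function.uncurry u)) :
    Continuous (fun p : ℝ × ℝ => u_xx u p.1 p.2) := by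
  have : (fun p : ℝ × ℝ => u_xx u p.1 p.2) =
      fun p => fderiv ℝ (Function.uncurry (u_x u)) p (0, 1) := by
    ext ⟨t, x⟩
    exact (hasDerivAt_u_x_space h t x).unique
      (hasDerivAt_slice_right (f := Function.uncurry (u_x u))
        ((contDiff_u_x h).differentiable (by norm_num) (t, x)))
  rw [this]
  exact ((contDiff_u_x h).continuous_fderiv (by norm_num)).clm_apply continuous_const

/-- Symmetry of second derivatives: the time derivative of `∂u/∂x` is `∂ₓ∂ₜu`. -/
lemma hasDerivAt_u_x_time (h : ContDiff ℝ 2 (Function.uncurry u)) (t x : ℝ) :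
    HasDerivAt (fun τ => u_x u τ x) (deriv (fun y => u_t u t y) x) t := by
  set f := Function.uncurry u with hf
  have hd : DifferentiableAt ℝ (fderiv ℝ f) (t, x) :=
    (h.fderiv_right (m := 1) (by norm_num)).differentiable (by norm_num) (t, x)
  have h1 : HasDerivAt (fun τ => u_x u τ x) (fderiv ℝ (fderiv ℝ f) (t, x) (1, 0) (0, 1)) t := by
    have e : (fun τ => u_x u τ x) = fun τ => fderiv ℝ f (τ, x) (0, 1) := by
      ext τ; exact u_x_eq h τ x
    rw [e]
    have := hd.hasFDerivAt.comp_hasDerivAt t ((hasDerivAt_id t).prodMk (hasDerivAt_const t x))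
    simpa using this.clm_apply (hasDerivAt_const t ((0 : ℝ), (1 : ℝ)))
  have h2 : HasDerivAt (fun y => u_t u t y)
      (fderiv ℝ (fderiv ℝ f) (t, x) (0, 1) (1, 0)) x := by
    have e : (fun y => u_t u t y) = fun y => fderiv ℝ f (t, y) (1, 0) := by
      ext y; exact u_t_eq h t y
    rw [e]
    have := hd.hasFDerivAt.comp_hasDerivAt x ((hasDerivAt_const x t).prodMk (hasDerivAt_id x))
    simpa using this.clm_apply (hasDerivAt_const x ((1 : ℝ), (0 : ℝ)))
  rw [h2.deriv, ← h.contDiffAt.isSymmSndFDerivAt (by simp) (1, 0) (0, 1)]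
  exact h1

lemma continuous_u_tx (h : ContDiff ℝ 2 (Function.uncurry u)) :
    Continuous (fun p : ℝ × ℝ => deriv (fun y => u_t u p.1 y) p.2) := by
  have : (fun p : ℝ × ℝ => deriv (fun y => u_t u p.1 y) p.2) =
      fun p => fderiv ℝ (Function.uncurry (u_t u)) p (0, 1) := by
    ext ⟨t, x⟩
    exact (hasDerivAt_slice_right (f := Function.uncurry (u_t u))
      ((contDiff_u_t h).differentiable (by norm_num) (t, x))).deriv
  rw [this]
  exact ((contDiff_u_t h).continuous_fderiv (by norm_num)).clm_apply continuous_const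

end Partial

/-! ### Reduction to a heat equation -/

/-- The expression for `∂ₓ²∂ₜu` obtained by solving the wave equation for it. It is continuous on
the whole plane when `u` is `C²`, whereas `u_txx u` need not be. -/
def txxRhs (σ μ : ℝ) (u : ℝ → ℝ → ℝ) (t x : ℝ) : ℝ :=
  (u_tt u t x - u_xx u t x + μ * u_t u t x) / σ

lemma continuous_txxRhs {σ μ : ℝ} {u : ℝ → ℝ → ℝ} (h : ContDiff ℝ 2 (Function.uncurry u)) :
    Continuous (fun p : ℝ × ℝ => txxRhs σ μ u p.1 p.2) := by
  have h1 := continuous_u_tt h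
  have h2 := continuous_u_xx h
  have h3 : Continuous (fun p : ℝ × ℝ => u_t u p.1 p.2) := (contDiff_u_t h).continuous
  unfold txxRhs
  fun_prop

/-- Integrated form of `∂ₜ∂ₓ²u = ∂ₓ²∂ₜu` on the open interval, by differentiation under the
integral sign in `∂ₓu(t,x) = ∂ₓu(0,x) + ∫₀ᵗ ∂ₓ∂ₜu(s,x) ds`. -/
lemma u_xx_eq_integral {σ μ : ℝ} {d : ℝ → ℝ} {u : ℝ → ℝ → ℝ} (hσ : 0 < σ)
    (hu : IsClassicalSolution σ μ d u) {t x : ℝ} (ht : 0 ≤ t) (hx : x ∈ Ioo (0 : ℝ) 1) :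
    u_xx u t x = u_xx u 0 x + ∫ s in (0 : ℝ)..t, txxRhs σ μ u s x := by
  obtain ⟨h, htC, hpde, -⟩ := hu
  have hG := continuous_txxRhs (σ := σ) (μ := μ) h
  have hm := continuous_u_tx h
  have hux : ∀ y, u_x u t y = u_x u 0 y + ∫ s in (0 : ℝ)..t, deriv (fun z => u_t u s z) y := by
    intro y
    have hc : Continuous fun s : ℝ => deriv (fun z => u_t u s z) y :=
      hm.comp (Continuous.prodMk_left y)
    rw [integral_eq_sub_of_hasDerivAt (fun s _ => hasDerivAt_u_x_time h s y)
      (hc.intervalIntegrable _ _)]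
    ring
  obtain ⟨C, hC⟩ := (isCompact_Icc (a := (0 : ℝ)) (b := t)).prod
    (isCompact_Icc (a := (0 : ℝ)) (b := 1)) |>.exists_bound_of_continuousOn hG.continuousOn
  have key := intervalIntegral.hasDerivAt_integral_of_dominated_loc_of_deriv_le (μ := volume)
    (a := 0) (b := t) (bound := fun _ => C)
    (F := fun y s => deriv (fun z => u_t u s z) y) (F' := fun y s => txxRhs σ μ u s y)
    (x₀ := x) (s := Ioo 0 1) (Ioo_mem_nhds hx.1 hx.2)
    (Eventually.of_forall fun y =>
      (hm.comp (Continuous.prodMk_left y)).aestronglyMeasurable)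
    ((hm.comp (Continuous.prodMk_left x)).intervalIntegrable _ _)
    (hG.comp (Continuous.prodMk_left x)).aestronglyMeasurable
    (Eventually.of_forall fun s hs y hy => by
      rw [uIoc_of_le ht] at hs
      exact hC (s, y) ⟨Ioc_subset_Icc_self hs, Ioo_subset_Icc_self hy⟩)
    intervalIntegrable_const
    (Eventually.of_forall fun s hs y hy => by
      rw [uIoc_of_le ht] at hs
      have e : txxRhs σ μ u s y = u_txx u s y := by
        rw [txxRhs, hpde s y hs.1.le (Ioo_subset_Icc_self hy)]
        field_simp
        ring
      have hd : ContDiff ℝ 1 (deriv (fun z => u_t u s z)) :=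
        ((contDiff_succ_iff_deriv (n := 1)).1 (htC s hs.1.le)).2.2
      rw [e]
      exact (hd.differentiable (by norm_num) y).hasDerivAt)
  have h2 := (hasDerivAt_u_x_space h 0 x).add key.2
  have h3 : HasDerivAt (fun y => u_x u t y)
      (u_xx u 0 x + ∫ s in (0 : ℝ)..t, txxRhs σ μ u s x) x := by
    refine h2.congr_of_eventuallyEq (Eventually.of_forall fun y => ?_)
    exact hux y
  exact (hasDerivAt_u_x_space h t x).unique h3

/-- When `μσ = 1`, the quantity `e^{μt} (∂ₜu - σ ∂ₓ²u)` is conserved. -/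
lemma forced_heat_equation {σ μ : ℝ} {d : ℝ → ℝ} {u : ℝ → ℝ → ℝ} (hσ : 0 < σ) (hμσ : μ * σ = 1)
    (hu : IsClassicalSolution σ μ d u) {t x : ℝ} (ht : 0 ≤ t) (hx : x ∈ Ioo (0 : ℝ) 1) :
    u_t u t x - σ * u_xx u t x = exp (-(μ * t)) * (u_t u 0 x - σ * u_xx u 0 x) := by
  have h := hu.1
  have hG : Continuous fun s => txxRhs σ μ u s x :=
    (continuous_txxRhs h).comp (Continuous.prodMk_left x)
  set W : ℝ → ℝ := fun s => exp (μ * s) *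
    (u_t u s x - σ * (u_xx u 0 x + ∫ r in (0 : ℝ)..s, txxRhs σ μ u r x)) with hW
  have hWd : ∀ s, HasDerivAt W (exp (μ * s) * (μ * 1) *
      (u_t u s x - σ * (u_xx u 0 x + ∫ r in (0 : ℝ)..s, txxRhs σ μ u r x)) +
      exp (μ * s) * (u_tt u s x - σ * txxRhs σ μ u s x)) s := by
    intro s
    have hi : HasDerivAt (fun s => ∫ r in (0 : ℝ)..s, txxRhs σ μ u r x) (txxRhs σ μ u s x) s :=
      hG.integral_hasStrictDerivAt 0 s |>.hasDerivAt
    exact (((hasDerivAt_id s).const_mul μ).exp).mul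
      ((hasDerivAt_u_t_time h s x).sub ((hi.const_add _).const_mul σ))
  have hconst : W t = W 0 := by
    refine constant_of_has_deriv_right_zero (a := 0) (b := t)
      (fun s _ => (hWd s).continuousAt.continuousWithinAt) (fun s hs => ?_) t ⟨ht, le_rfl⟩
    have := (hWd s).hasDerivWithinAt (s := Ici s)
    convert this using 1
    rw [← u_xx_eq_integral hσ hu hs.1 hx]
    have : σ * txxRhs σ μ u s x = u_tt u s x - u_xx u s x + μ * u_t u s x := by
      rw [txxRhs]; field_simp
    rw [this]
    linear_combination (-exp (μ * s) * u_xx u s x) * (-hμσ)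
  simp only [hW, integral_same, mul_zero, exp_zero, one_mul, add_zero,
    ← u_xx_eq_integral hσ hu ht hx] at hconst
  rw [← hconst, ← mul_assoc, ← exp_add]
  simp

/-! ### Maximum principle and decay estimate -/

lemma deriv_deriv_nonneg_of_isLocalMin {f : ℝ → ℝ} {x : ℝ} (hf : IsLocalMin f x)
    (hc : ContinuousAt f x) : 0 ≤ deriv (deriv f) x := by
  by_contra! hneg
  -- A negative second derivative makes `x` also a local maximum, so `f` is locally constant.
  have hmax := isLocalMax_of_deriv_deriv_neg hneg hf.deriv_eq_zero hc
  have heq : f =ᶠ[nhds x] fun _ => f x := by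
    filter_upwards [hf, hmax] with y h1 h2 using le_antisymm h2 h1
  have h0 : deriv (deriv f) x = 0 := by
    rw [heq.deriv.deriv_eq]
    simp
  exact hneg.ne h0

lemma pos_of_strict_supersolution {σ : ℝ} (hσ : 0 < σ) {q : ℝ → ℝ → ℝ}
    (hq : ContDiff ℝ 2 (Function.uncurry q)) (hinit : ∀ x ∈ Icc (0 : ℝ) 1, 0 < q 0 x)
    (hbd : ∀ t, 0 ≤ t → 0 < q t 0 ∧ 0 < q t 1)
    (hpde : ∀ t x, 0 < t → x ∈ Ioo (0 : ℝ) 1 → 0 < u_t q t x - σ * u_xx q t x)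
    {t x : ℝ} (ht : 0 ≤ t) (hx : x ∈ Icc (0 : ℝ) 1) : 0 < q t x := by
  obtain ⟨⟨s, y⟩, ⟨hs, hy⟩, hmin⟩ := ((isCompact_Icc (a := (0 : ℝ)) (b := t)).prod
    (isCompact_Icc (a := (0 : ℝ)) (b := 1))).exists_isMinOn
    ⟨(t, x), ⟨⟨ht, le_rfl⟩, hx⟩⟩ hq.continuous.continuousOn
  simp only at hs hy
  have hle : ∀ r ∈ Icc (0 : ℝ) t, ∀ z ∈ Icc (0 : ℝ) 1, q s y ≤ q r z :=
    fun r hr z hz => hmin (show (r, z) ∈ Icc (0 : ℝ) t ×ˢ Icc (0 : ℝ) 1 from ⟨hr, hz⟩)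
  refine lt_of_lt_of_le ?_ (hle t ⟨ht, le_rfl⟩ x hx)
  by_contra! hneg
  have hs0 : 0 < s := by
    rcases hs.1.eq_or_lt with h | h
    · subst h; exact absurd (hinit y hy) hneg.not_gt
    · exact h
  have hy0 : 0 < y := by
    rcases hy.1.eq_or_lt with h | h
    · subst h; exact absurd (hbd s hs.1).1 hneg.not_gt
    · exact h
  have hy1 : y < 1 := by
    rcases hy.2.eq_or_lt with h | h
    · subst h; exact absurd (hbd s hs.1).2 hneg.not_gt
    · exact h
  have hxx : 0 ≤ u_xx q s y := by
    refine deriv_deriv_nonneg_of_isLocalMin ?_ (hasDerivAt_u_space hq s y).continuousAt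
    filter_upwards [Ioo_mem_nhds hy0 hy1] with z hz using hle s hs z (Ioo_subset_Icc_self hz)
  -- The minimum may sit at the final time, so only the left difference quotient is usable.
  have htt : u_t q s y ≤ 0 := by
    have hl := (hasDerivAt_u_time hq s y).hasDerivWithinAt (s := Iio s)
    rw [hasDerivWithinAt_iff_tendsto_slope' (by simp)] at hl
    refine le_of_tendsto hl ?_
    filter_upwards [Ioo_mem_nhdsLT hs0] with r hr
    rw [slope_def_field]
    exact div_nonpos_of_nonneg_of_nonpos
      (sub_nonneg.2 (hle r ⟨hr.1.le, hr.2.le.trans hs.2⟩ y hy)) (sub_nonpos.2 hr.2.le)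
  have := hpde s y hs0 ⟨hy0, hy1⟩
  have := mul_nonneg hσ.le hxx
  linarith

/-- The comparison of `ε u`, for a sign `ε`, with the barrier `S + A e^{-λt} (2 - x²)`. -/
lemma signed_bound {σ μ l A S V U e : ℝ} {d : ℝ → ℝ} {u : ℝ → ℝ → ℝ} (hσ : 0 < σ)
    (hμσ : μ * σ = 1) (hu : IsClassicalSolution σ μ d u) (he : |e| = 1) (hS0 : 0 ≤ S)
    (hS : ∀ t, 0 ≤ t → |d t| ≤ S) (hlμ : l ≤ μ) (hlσ : l ≤ σ / 2)
    (hV : ∀ x ∈ Icc (0 : ℝ) 1, |u_t u 0 x - σ * u_xx u 0 x| ≤ V)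
    (hU : ∀ x ∈ Icc (0 : ℝ) 1, |u 0 x| ≤ U) (hA0 : 0 < A) (hAU : U < A) (hAV : V < A * σ)
    {t x : ℝ} (ht : 0 ≤ t) (hx : x ∈ Icc (0 : ℝ) 1) :
    e * u t x < S + A * exp (-(l * t)) * (2 - x ^ 2) := by
  have h := hu.1
  have hele : ∀ a : ℝ, e * a ≤ |a| := fun a => by
    calc e * a ≤ |e * a| := le_abs_self _
      _ = |a| := by rw [abs_mul, he, one_mul]
  set q : ℝ → ℝ → ℝ := fun t x => S + A * exp (-(l * t)) * (2 - x ^ 2) - e * u t x with hq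
  have hqC : ContDiff ℝ 2 (Function.uncurry q) := by
    have : Function.uncurry q = fun p : ℝ × ℝ =>
        S + A * exp (-(l * p.1)) * (2 - p.2 ^ 2) - e * Function.uncurry u p := by
      ext ⟨a, b⟩; rfl
    rw [this]
    fun_prop
  suffices 0 < q t x by simp only [hq] at this; linarith
  refine pos_of_strict_supersolution hσ hqC ?_ ?_ ?_ ht hx
  · intro y hy
    have h1 := (hele (u 0 y)).trans (hU y hy)
    have h2 : y ^ 2 ≤ 1 := by nlinarith [hy.1, hy.2]
    simp only [hq, mul_zero, neg_zero, exp_zero, mul_one]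
    nlinarith
  · intro s hs
    obtain ⟨b0, b1⟩ := hu.2.2.2 s hs
    have h1 := (hele (d s)).trans (hS s hs)
    have h2 : 0 < A * exp (-(l * s)) := by positivity
    simp only [hq, b0, b1]
    constructor <;> nlinarith
  · intro s y hs hy
    have hqt : u_t q s y =
        A * (exp (-(l * s)) * (-(l * 1))) * (2 - y ^ 2) - e * u_t u s y := by
      refine HasDerivAt.deriv ?_
      exact (((((((hasDerivAt_id s).const_mul l).neg).exp).const_mul A).mul_const _).const_add
        S).sub ((hasDerivAt_u_time h s y).const_mul e)
    have hqx : ∀ z, deriv (fun y => q s y) z =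
        A * exp (-(l * s)) * (-(2 * z)) - e * u_x u s z := by
      intro z
      refine HasDerivAt.deriv ?_
      have hp : HasDerivAt (fun y : ℝ => 2 - y ^ 2) (-(2 * z)) z := by
        simpa using (hasDerivAt_pow 2 z).const_sub 2
      exact ((hp.const_mul _).const_add S).sub ((hasDerivAt_u_space h s z).const_mul e)
    have hqxx : u_xx q s y = A * exp (-(l * s)) * (-2) - e * u_xx u s y := by
      unfold u_xx
      rw [funext hqx]
      refine HasDerivAt.deriv ?_
      have hp : HasDerivAt (fun y : ℝ => -(2 * y)) (-2) y := by
        simpa using (hasDerivAt_id y).const_mul (-2 : ℝ)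
      exact (hp.const_mul _).sub ((hasDerivAt_u_x_space h s y).const_mul e)
    have hheat := forced_heat_equation hσ hμσ hu hs.le hy
    have hforce : e * (u_t u s y - σ * u_xx u s y) ≤ exp (-(l * s)) * V := by
      refine (hele _).trans ?_
      rw [hheat, abs_mul, abs_of_pos (exp_pos _)]
      have hexp : exp (-(μ * s)) ≤ exp (-(l * s)) :=
        exp_le_exp.2 (neg_le_neg (mul_le_mul_of_nonneg_right hlμ hs.le))
      exact mul_le_mul hexp (hV y (Ioo_subset_Icc_self hy)) (abs_nonneg _) (exp_pos _).le
    have hy2 : l * (2 - y ^ 2) ≤ σ := by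
      have h1 : 0 ≤ 2 - y ^ 2 := by nlinarith [hy.1, hy.2]
      nlinarith [mul_le_mul_of_nonneg_right hlσ h1, sq_nonneg y]
    have hE := exp_pos (-(l * s))
    have hk : 0 < exp (-(l * s)) * (A * (2 * σ - l * (2 - y ^ 2)) - V) := by
      refine mul_pos hE ?_
      nlinarith
    rw [hqt, hqxx]
    nlinarith

lemma exists_decay_bound {σ μ S : ℝ} {d : ℝ → ℝ} {u : ℝ → ℝ → ℝ} (hσ : 0 < σ)
    (hμσ : μ * σ = 1) (hu : IsClassicalSolution σ μ d u) (hS : ∀ t, 0 ≤ t → |d t| ≤ S) :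
    ∃ A l : ℝ, 0 < A ∧ 0 < l ∧ ∀ t, 0 ≤ t → ∀ x ∈ Icc (0 : ℝ) 1,
      |u t x| ≤ S + 2 * A * exp (-(l * t)) := by
  have h := hu.1
  have hS0 : 0 ≤ S := (abs_nonneg _).trans (hS 0 le_rfl)
  have hμ : 0 < μ := by
    by_contra! hn
    nlinarith
  have c1 : Continuous fun x => u_t u 0 x - σ * u_xx u 0 x :=
    ((contDiff_u_t h).continuous.comp (Continuous.prodMk_right 0)).sub
      (((continuous_u_xx h).comp (Continuous.prodMk_right 0)).const_mul σ)
  have c2 : Continuous fun x => u 0 x := h.continuous.comp (Continuous.prodMk_right 0)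
  obtain ⟨V, hV⟩ := (isCompact_Icc (a := (0 : ℝ)) (b := 1)).exists_bound_of_continuousOn
    c1.continuousOn
  obtain ⟨U, hU⟩ := (isCompact_Icc (a := (0 : ℝ)) (b := 1)).exists_bound_of_continuousOn
    c2.continuousOn
  set A := |U| + |V| / σ + 1 with hA
  have hVσ : 0 ≤ |V| / σ := by positivity
  have hA0 : 0 < A := by positivity
  have hAU : U < A := by linarith [le_abs_self U]
  have hAV : V < A * σ := by
    have : |V| / σ * σ = |V| := by field_simp
    nlinarith [le_abs_self V, mul_nonneg (abs_nonneg U) hσ.le]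
  refine ⟨A, min μ (σ / 2), hA0, lt_min hμ (by positivity), fun t ht x hx => ?_⟩
  have hE := exp_pos (-(min μ (σ / 2) * t))
  have b := fun (e : ℝ) (he : |e| = 1) => signed_bound hσ hμσ hu he hS0 hS (min_le_left _ _)
    (min_le_right _ _) hV hU hA0 hAU hAV ht hx
  have b1 := b 1 (by simp)
  have b2 := b (-1) (by simp)
  have hx2 : 0 ≤ A * exp (-(min μ (σ / 2) * t)) * x ^ 2 := by positivity
  rw [abs_le]
  constructor <;> linarith

/-- when `μσ = 1`, the asymptotic gain of the displacement in the spatial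
sup norm equals `1`: the constant `1` is an asymptotic-gain constant, and any
asymptotic-gain constant `γ` satisfies `γ ≥ 1`. -/
theorem asymptotic_gain_sup_eq_one
    (σ μ : ℝ) (hσ : 0 < σ) (hμ : 0 ≤ μ) (hμσ : μ * σ = 1) :
    (∀ (d : ℝ → ℝ) (u : ℝ → ℝ → ℝ), BddC2 d → IsClassicalSolution σ μ d u →
      Filter.limsup (fun t => supNorm u t) Filter.atTop ≤ supD d) ∧
    (∀ γ : ℝ, 0 ≤ γ →
      (∀ (d : ℝ → ℝ) (u : ℝ → ℝ → ℝ), BddC2 d → IsClassicalSolution σ μ d u →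
        Filter.limsup (fun t => supNorm u t) Filter.atTop ≤ γ * supD d) →
      1 ≤ γ) := by
  constructor
  · intro d u hd hu
    have hS : ∀ t, 0 ≤ t → |d t| ≤ supD d := by
      intro t ht
      obtain ⟨-, M, hM⟩ := hd
      exact le_csSup ⟨M, by rintro y ⟨s, hs, rfl⟩; exact hM s hs⟩ ⟨t, ht, rfl⟩
    obtain ⟨A, l, hA, hl, hb⟩ := exists_decay_bound hσ hμσ hu hS
    have hle : ∀ᶠ t in atTop, supNorm u t ≤ supD d + 2 * A * exp (-(l * t)) := by
      filter_upwards [eventually_ge_atTop 0] with t ht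
      refine csSup_le ⟨_, 0, by simp, rfl⟩ ?_
      rintro y ⟨x, hx, rfl⟩
      exact hb t ht x hx
    have hlim : Tendsto (fun t => supD d + 2 * A * exp (-(l * t))) atTop (nhds (supD d)) := by
      have h1 : Tendsto (fun t => exp (-(l * t))) atTop (nhds 0) :=
        tendsto_exp_neg_atTop_nhds_zero.comp (tendsto_id.const_mul_atTop hl)
      simpa using (h1.const_mul (2 * A)).const_add (supD d)
    have hco : IsCoboundedUnder (· ≤ ·) atTop (fun t => supNorm u t) := by
      refine IsBoundedUnder.isCoboundedUnder_le ⟨0, ?_⟩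
      refine eventually_map.2 (Eventually.of_forall fun t => Real.sSup_nonneg ?_)
      rintro y ⟨x, -, rfl⟩
      exact abs_nonneg _
    exact (limsup_le_limsup hle hco hlim.isBoundedUnder_le).trans hlim.limsup_eq.le
  · intro γ _ H
    have hsol : IsClassicalSolution σ μ (fun _ => 1) (fun _ x => 1 - x) := by
      have ht : u_t (fun _ x : ℝ => 1 - x) = fun _ _ => 0 := by
        ext t x; simp [u_t]
      refine ⟨?_, ?_, ?_, ?_⟩
      · have : Function.uncurry (fun _ x : ℝ => 1 - x) = fun p : ℝ × ℝ => 1 - p.2 := by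
          ext ⟨a, b⟩; rfl
        rw [this]; fun_prop
      · intro t _
        rw [ht]; fun_prop
      · intro t x _ _
        simp [u_tt, u_xx, u_txx, ht]
      · intro t _
        simp
    have hd : BddC2 (fun _ => 1) := ⟨contDiff_const, 1, by simp⟩
    have hsup : ∀ t, supNorm (fun _ x => 1 - x) t = 1 := by
      intro t
      refine IsGreatest.csSup_eq ⟨⟨0, by simp, by simp⟩, ?_⟩
      rintro y ⟨x, hx, rfl⟩
      rw [abs_of_nonneg (by linarith [hx.2])]
      linarith [hx.1]
    have hsd : supD (fun _ => 1) = 1 := by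
      refine IsGreatest.csSup_eq ⟨⟨0, by simp, by simp⟩, ?_⟩
      rintro y ⟨x, hx, rfl⟩
      simp
    have := H _ _ hd hsol
    simpa [hsup, hsd] using this
end
end
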